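/- Let M be an Orlicz function, 1 ≤ p < ∞ and m ≥ 1, n ≥ 1 integers. Then ℓ_p(M, Δ_m^n) = { real sequences x = (x_k)_{k≥1} : there exists ρ > 0 with Σ_{k=1}^∞ (M(|Δ_m^n x_k|/ρ))^p < ∞ } is a complete metric space with respect to the metric f₃(x,y) = Σ_{r=1}^{mn} |x_r − y_r| + inf{ ρ > 0 : (Σ_{k=1}^∞ (M(|Δ_m^n x_k − Δ_m^n y_k|/ρ))^p)^{1/p} ≤ 1 }. -/

import Mathlib

/-!
Statement 9 (Paper: Proposition 3.2(iii)).  `ℓ_p(M, Δ_m^n)` is a complete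
metric space with respect to the metric `f₃`.  Sequences are indexed so that
`x k` represents the paper's `x_{k+1}`.
-/

open scoped ENNReal

/-- An Orlicz function. -/
def IsOrliczFunction (M : ℝ → ℝ) : Prop :=
  ContinuousOn M (Set.Ici 0) ∧ MonotoneOn M (Set.Ici 0) ∧ ConvexOn ℝ (Set.Ici 0) M ∧
    M 0 = 0 ∧ (∀ x : ℝ, 0 < x → 0 < M x) ∧ Filter.Tendsto M Filter.atTop Filter.atTop

/-- The generalized difference operator. -/
def delta (m : ℕ) : ℕ → (ℕ → ℝ) → ℕ → ℝ
  | 0, x => x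
  | n + 1, x => fun k => delta m n x k - delta m n x (k + m)

/-- `∑_{k=1}^∞ (M (|x_k| / ρ))^p`, valued in `ℝ≥0∞`. -/
noncomputable def lpSum (M : ℝ → ℝ) (p : ℝ) (x : ℕ → ℝ) (ρ : ℝ) : ℝ≥0∞ :=
  ∑' k : ℕ, ENNReal.ofReal (M (|x k| / ρ)) ^ p

/-- The space `ℓ_p(M, Δ_m^n)`. -/
def lpMDelta (M : ℝ → ℝ) (p : ℝ) (m n : ℕ) : Set (ℕ → ℝ) :=
  {x | ∃ ρ > 0, lpSum M p (delta m n x) ρ < ⊤}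

/-- The metric `f₃`. -/
noncomputable def f3 (M : ℝ → ℝ) (p : ℝ) (m n : ℕ) (x y : ℕ → ℝ) : ℝ :=
  (∑ r ∈ Finset.range (m * n), |x r - y r|) +
    sInf {ρ : ℝ | 0 < ρ ∧
      (lpSum M p (fun k => delta m n x k - delta m n y k) ρ) ^ (1 / p) ≤ 1}

theorem orl_nonneg {M : ℝ → ℝ} (hM : IsOrliczFunction M) {t : ℝ} (ht : 0 ≤ t) : 0 ≤ M t := by
  obtain ⟨_, _, _, h0, hpos, _⟩ := hM
  rcases ht.eq_or_lt with h | h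
  · rw [← h, h0]
  · exact (hpos t h).le

theorem phi_conv {M : ℝ → ℝ} (hM : IsOrliczFunction M) {p : ℝ} (hp : 1 ≤ p) {s t u α β : ℝ}
    (hs : 0 ≤ s) (ht : 0 ≤ t) (hu : 0 ≤ u) (hα : 0 ≤ α) (hβ : 0 ≤ β) (hab : α + β = 1)
    (h : u ≤ α * s + β * t) :
    ENNReal.ofReal (M u) ^ p ≤ ENNReal.ofReal α * ENNReal.ofReal (M s) ^ p
      + ENNReal.ofReal β * ENNReal.ofReal (M t) ^ p := by
  have hp0 : 0 ≤ p := by linarith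
  have h1 := orl_nonneg hM hs
  have h2 := orl_nonneg hM ht
  have h3 := orl_nonneg hM hu
  rw [ENNReal.ofReal_rpow_of_nonneg h1 hp0, ENNReal.ofReal_rpow_of_nonneg h2 hp0,
    ENNReal.ofReal_rpow_of_nonneg h3 hp0, ← ENNReal.ofReal_mul hα, ← ENNReal.ofReal_mul hβ,
    ← ENNReal.ofReal_add (by positivity) (by positivity)]
  apply ENNReal.ofReal_le_ofReal
  have hmid : 0 ≤ α * s + β * t := by positivity
  have e1 : M u ≤ M (α * s + β * t) := hM.2.1 hu hmid h
  have e2 : M (α * s + β * t) ≤ α * M s + β * M t := by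
    simpa using hM.2.2.1.2 (x := s) hs (y := t) ht hα hβ hab
  have e3 : (α * M s + β * M t) ^ p ≤ α * M s ^ p + β * M t ^ p := by
    simpa using (convexOn_rpow hp).2 (x := M s) h1 (y := M t) h2 hα hβ hab
  exact (Real.rpow_le_rpow h3 (e1.trans e2) hp0).trans e3

theorem lpSum_add {M : ℝ → ℝ} (hM : IsOrliczFunction M) {p : ℝ} (hp : 1 ≤ p) (z w : ℕ → ℝ)
    {a b : ℝ} (ha : 0 < a) (hb : 0 < b) :
    lpSum M p (fun k => z k + w k) (a + b) ≤
      ENNReal.ofReal (a / (a + b)) * lpSum M p z a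
        + ENNReal.ofReal (b / (a + b)) * lpSum M p w b := by
  unfold lpSum
  rw [← ENNReal.tsum_mul_left, ← ENNReal.tsum_mul_left, ← ENNReal.tsum_add]
  refine ENNReal.tsum_le_tsum fun k => ?_
  refine phi_conv hM hp (by positivity) (by positivity) (by positivity) (by positivity)
    (by positivity) (by field_simp) ?_
  have : a / (a + b) * (|z k| / a) + b / (a + b) * (|w k| / b) = (|z k| + |w k|) / (a + b) := by
    field_simp
  rw [this]
  gcongr
  exact abs_add_le _ _

theorem lpSum_add_le_one {M : ℝ → ℝ} (hM : IsOrliczFunction M) {p : ℝ} (hp : 1 ≤ p)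
    (z w : ℕ → ℝ) {a b : ℝ} (ha : 0 < a) (hb : 0 < b) (h1 : lpSum M p z a ≤ 1)
    (h2 : lpSum M p w b ≤ 1) : lpSum M p (fun k => z k + w k) (a + b) ≤ 1 := by
  refine (lpSum_add hM hp z w ha hb).trans ?_
  calc _ ≤ ENNReal.ofReal (a / (a + b)) * 1 + ENNReal.ofReal (b / (a + b)) * 1 := by gcongr
    _ = 1 := by
      rw [mul_one, mul_one, ← ENNReal.ofReal_add (by positivity) (by positivity)]
      rw [show a / (a + b) + b / (a + b) = 1 by field_simp]
      simp

theorem lpSum_zero {M : ℝ → ℝ} (hM : IsOrliczFunction M) {p : ℝ} (hp : 1 ≤ p) (ρ : ℝ) :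
    lpSum M p (fun _ => 0) ρ = 0 := by
  have : 0 < p := by linarith
  simp [lpSum, hM.2.2.2.1, this]

theorem lpSum_mono {M : ℝ → ℝ} (hM : IsOrliczFunction M) {p : ℝ} (hp : 1 ≤ p) (z : ℕ → ℝ)
    {a b : ℝ} (ha : 0 < a) (hab : a ≤ b) : lpSum M p z b ≤ lpSum M p z a := by
  have hb : 0 < b := by linarith
  have hp0 : 0 ≤ p := by linarith
  refine ENNReal.tsum_le_tsum fun k => ?_
  refine ENNReal.rpow_le_rpow (ENNReal.ofReal_le_ofReal ?_) hp0
  refine hM.2.1 (Set.mem_Ici.2 (by positivity)) (Set.mem_Ici.2 (by positivity)) ?_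
  gcongr

theorem lpSum_neg {M : ℝ → ℝ} {p : ℝ} (z : ℕ → ℝ) (ρ : ℝ) :
    lpSum M p (fun k => - z k) ρ = lpSum M p z ρ := by
  simp [lpSum]

theorem lpSum_exists {M : ℝ → ℝ} (hM : IsOrliczFunction M) {p : ℝ} (hp : 1 ≤ p) (z : ℕ → ℝ)
    {a : ℝ} (ha : 0 < a) (h : lpSum M p z a < ⊤) : ∃ b, 0 < b ∧ lpSum M p z b ≤ 1 := by
  set S := (lpSum M p z a).toReal with hS
  have hS0 : 0 ≤ S := ENNReal.toReal_nonneg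
  have hSe : lpSum M p z a = ENNReal.ofReal S := (ENNReal.ofReal_toReal h.ne).symm
  refine ⟨a + a * (S + 1), by positivity, ?_⟩
  have := lpSum_add hM hp z (fun _ => 0) ha (b := a * (S + 1)) (by positivity)
  rw [lpSum_zero hM hp, mul_zero, add_zero, hSe, ← ENNReal.ofReal_mul (by positivity)] at this
  simp only [add_zero] at this
  refine this.trans (ENNReal.ofReal_le_one.2 ?_)
  rw [div_mul_eq_mul_div, div_le_one (by positivity)]
  nlinarith

theorem exists_T {M : ℝ → ℝ} (hM : IsOrliczFunction M) {p : ℝ} (hp : 1 ≤ p) :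
    ∃ T : ℝ, 1 ≤ T ∧ ∀ (z : ℕ → ℝ) (ρ : ℝ), 0 < ρ → lpSum M p z ρ ≤ 1 → ∀ k, |z k| ≤ T * ρ := by
  have hp0 : 0 < p := by linarith
  obtain ⟨T, hT⟩ := Filter.eventually_atTop.1 (hM.2.2.2.2.2.eventually_gt_atTop 1)
  refine ⟨max T 1, le_max_right _ _, fun z ρ hρ h k => ?_⟩
  by_contra! hc
  have h1 : 1 < M (|z k| / ρ) := hT _ ((le_max_left T 1).trans ((le_div_iff₀ hρ).2 hc.le))
  have h2 : ENNReal.ofReal (M (|z k| / ρ)) ^ p ≤ 1 := (ENNReal.le_tsum k).trans h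
  have h3 := ENNReal.one_lt_rpow (ENNReal.one_lt_ofReal.2 h1) hp0
  exact absurd h2 (not_le.2 h3)

theorem orl_cont {M : ℝ → ℝ} (hM : IsOrliczFunction M) {ρ : ℝ} (hρ : 0 < ρ) (p : ℝ) :
    Continuous fun t : ℝ => ENNReal.ofReal (M (|t| / ρ)) ^ p := by
  have h1 : Continuous fun t : ℝ => M (|t| / ρ) := by
    refine hM.1.comp_continuous (by fun_prop) fun t => Set.mem_Ici.2 (by positivity)
  exact ENNReal.continuous_rpow_const.comp (ENNReal.continuous_ofReal.comp h1)

theorem lpSum_lim {M : ℝ → ℝ} (hM : IsOrliczFunction M) {p : ℝ} {ρ : ℝ} (hρ : 0 < ρ)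
    (z : ℕ → ℕ → ℝ) (w : ℕ → ℝ)
    (hz : ∀ k, Filter.Tendsto (fun j => z j k) Filter.atTop (nhds (w k)))
    (h : ∀ᶠ j in Filter.atTop, lpSum M p (z j) ρ ≤ 1) : lpSum M p w ρ ≤ 1 := by
  unfold lpSum
  rw [ENNReal.tsum_eq_iSup_sum]
  refine iSup_le fun s => ?_
  refine le_of_tendsto (f := fun j => ∑ k ∈ s, ENNReal.ofReal (M (|z j k| / ρ)) ^ p)
    (tendsto_finsetSum s fun k _ => ((orl_cont hM hρ p).tendsto (w k)).comp (hz k)) ?_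
  filter_upwards [h] with j hj
  exact (ENNReal.sum_le_tsum s).trans hj

theorem delta_sub (m n : ℕ) (x y : ℕ → ℝ) (k : ℕ) :
    delta m n (fun k => x k - y k) k = delta m n x k - delta m n y k := by
  induction n generalizing k with
  | zero => rfl
  | succ n ih => simp only [delta, ih]; ring

theorem delta_shift (m n : ℕ) (x : ℕ → ℝ) (k : ℕ) :
    delta m (n + 1) x k = delta m n (fun k => x k - x (k + m)) k := by
  induction n generalizing k with
  | zero => rfl
  | succ n ih =>
    change delta m (n + 1) x k - delta m (n + 1) x (k + m) = _
    rw [ih, ih]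
    rfl

theorem delta_tendsto (m n : ℕ) (u : ℕ → ℕ → ℝ) (x : ℕ → ℝ)
    (h : ∀ k, Filter.Tendsto (fun j => u j k) Filter.atTop (nhds (x k))) (k : ℕ) :
    Filter.Tendsto (fun j => delta m n (u j) k) Filter.atTop (nhds (delta m n x k)) := by
  induction n generalizing k with
  | zero => exact h k
  | succ n ih => exact (ih k).sub (ih (k + m))

theorem delta_bound (m : ℕ) (hm : 1 ≤ m) (n : ℕ) : ∀ k : ℕ, ∃ C : ℝ, 0 ≤ C ∧
    ∀ (x : ℕ → ℝ) (D : ℝ), (∀ r < m * n, |x r| ≤ D) → (∀ i, |delta m n x i| ≤ D) →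
      |x k| ≤ C * D := by
  induction n with
  | zero => exact fun k => ⟨1, zero_le_one, fun x D _ h => by simpa [delta] using h k⟩
  | succ n ih =>
    intro k
    induction k using Nat.strong_induction_on with
    | _ k ihk =>
      by_cases hk : k < m
      · refine ⟨1, zero_le_one, fun x D h _ => ?_⟩
        rw [one_mul]
        exact h k (by nlinarith)
      · push Not at hk
        obtain ⟨C1, hC1, h1⟩ := ihk (k - m) (by omega)
        obtain ⟨C2, hC2, h2⟩ := ih (k - m)
        refine ⟨C1 + C2 * 2, by positivity, fun x D hx hd => ?_⟩
        have hD : 0 ≤ D := (abs_nonneg _).trans (hd 0)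
        have e1 := h1 x D hx hd
        have e2 := h2 (fun k => x k - x (k + m)) (2 * D) (fun r hr => by
          have a1 := hx r (by nlinarith)
          have a2 := hx (r + m) (by nlinarith)
          have := abs_sub (x r) (x (r + m))
          linarith) (fun i => by
          rw [← delta_shift]
          linarith [hd i])
        simp only [Nat.sub_add_cancel hk] at e2
        have : |x k| ≤ |x (k - m)| + |x (k - m) - x k| := by
          have := abs_sub (x (k - m)) (x (k - m) - x k)
          rwa [sub_sub_cancel] at this
        linarith

/-- The Luxemburg functional. -/
noncomputable def lux (M : ℝ → ℝ) (p : ℝ) (z : ℕ → ℝ) : ℝ :=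
  sInf {ρ : ℝ | 0 < ρ ∧ lpSum M p z ρ ≤ 1}

theorem f3_eq (M : ℝ → ℝ) {p : ℝ} (hp : 1 ≤ p) (m n : ℕ) (x y : ℕ → ℝ) :
    f3 M p m n x y = (∑ r ∈ Finset.range (m * n), |x r - y r|) +
      lux M p (fun k => delta m n x k - delta m n y k) := by
  have hp0 : 0 < 1 / p := by positivity
  unfold f3 lux
  congr! 5
  conv_rhs => rw [← ENNReal.rpow_le_rpow_iff hp0, ENNReal.one_rpow]

theorem lux_le {M : ℝ → ℝ} {p : ℝ} {z : ℕ → ℝ} {ρ : ℝ} (hρ : 0 < ρ) (h : lpSum M p z ρ ≤ 1) :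
    lux M p z ≤ ρ := csInf_le ⟨0, fun _ h => h.1.le⟩ ⟨hρ, h⟩

theorem lux_nonneg (M : ℝ → ℝ) (p : ℝ) (z : ℕ → ℝ) : 0 ≤ lux M p z :=
  Real.sInf_nonneg fun _ h => h.1.le

theorem lux_lt {M : ℝ → ℝ} (hM : IsOrliczFunction M) {p : ℝ} (hp : 1 ≤ p) {z : ℕ → ℝ}
    (hz : ∃ b, 0 < b ∧ lpSum M p z b ≤ 1) {ε : ℝ} (h : lux M p z < ε) :
    0 < ε ∧ lpSum M p z ε ≤ 1 := by
  obtain ⟨b, ⟨hb, hb1⟩, hbε⟩ := exists_lt_of_csInf_lt hz h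
  exact ⟨hb.trans hbε, (lpSum_mono hM hp z hb hbε.le).trans hb1⟩

theorem lux_add {M : ℝ → ℝ} (hM : IsOrliczFunction M) {p : ℝ} (hp : 1 ≤ p) {z w : ℕ → ℝ}
    (hz : ∃ b, 0 < b ∧ lpSum M p z b ≤ 1) (hw : ∃ b, 0 < b ∧ lpSum M p w b ≤ 1) :
    lux M p (fun k => z k + w k) ≤ lux M p z + lux M p w := by
  refine le_of_forall_pos_le_add fun ε hε => ?_
  obtain ⟨h1, h2⟩ := lux_lt hM hp hz (show lux M p z < lux M p z + ε / 2 by linarith)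
  obtain ⟨h3, h4⟩ := lux_lt hM hp hw (show lux M p w < lux M p w + ε / 2 by linarith)
  have := lux_le (by positivity) (lpSum_add_le_one hM hp z w h1 h3 h2 h4)
  linarith

theorem mem_sub {M : ℝ → ℝ} (hM : IsOrliczFunction M) {p : ℝ} (hp : 1 ≤ p) {z w : ℕ → ℝ}
    (hz : ∃ ρ > 0, lpSum M p z ρ < ⊤) (hw : ∃ ρ > 0, lpSum M p w ρ < ⊤) :
    ∃ b, 0 < b ∧ lpSum M p (fun k => z k - w k) b ≤ 1 := by
  obtain ⟨a, ha, h1⟩ := hz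
  obtain ⟨b, hb, h2⟩ := hw
  obtain ⟨a, ha, h1⟩ := lpSum_exists hM hp z ha h1
  obtain ⟨b, hb, h2⟩ := lpSum_exists hM hp w hb h2
  rw [← lpSum_neg] at h2
  have := lpSum_add_le_one hM hp _ _ ha hb h1 h2
  exact ⟨a + b, by positivity, by simpa only [sub_eq_add_neg] using this⟩

theorem f3_bound {M : ℝ → ℝ} (hM : IsOrliczFunction M) {p : ℝ} (hp : 1 ≤ p) {m : ℕ} (hm : 1 ≤ m)
    (n : ℕ) (k : ℕ) : ∃ C : ℝ, 0 < C ∧ ∀ a b : lpMDelta M p m n,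
      |a.1 k - b.1 k| ≤ C * f3 M p m n a.1 b.1 := by
  obtain ⟨T, hT1, hT⟩ := exists_T hM hp
  obtain ⟨C, hC, h⟩ := delta_bound m hm n k
  refine ⟨(C + 1) * T, by positivity, fun a b => ?_⟩
  set d := f3 M p m n a.1 b.1 with hd
  rw [f3_eq M hp] at hd
  have hl := lux_nonneg M p (fun k => delta m n a.1 k - delta m n b.1 k)
  have hs : 0 ≤ ∑ r ∈ Finset.range (m * n), |a.1 r - b.1 r| :=
    Finset.sum_nonneg fun _ _ => abs_nonneg _
  have hd0 : 0 ≤ d := by linarith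
  have := h (fun k => a.1 k - b.1 k) (T * d) (fun r hr => by
      have := Finset.single_le_sum (f := fun r => |a.1 r - b.1 r|)
        (fun _ _ => abs_nonneg _) (Finset.mem_range.2 hr)
      nlinarith) (fun i => by
      rw [delta_sub]
      have key : ∀ ε > 0, |delta m n a.1 i - delta m n b.1 i| ≤ T * d + ε := fun ε hε => by
        obtain ⟨h1, h2⟩ := lux_lt hM hp (mem_sub hM hp a.2 b.2) (ε := d + ε / T) (by
          have : 0 < ε / T := by positivity
          linarith)
        have := hT _ _ h1 h2 i
        have e : T * (d + ε / T) = T * d + ε := by field_simp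
        rwa [e] at this
      exact le_of_forall_pos_le_add key)
  have : 0 ≤ T * d := by positivity
  nlinarith

/-- The metric space. -/
noncomputable def lpMetric (M : ℝ → ℝ) (hM : IsOrliczFunction M) (p : ℝ) (hp : 1 ≤ p)
    (m n : ℕ) (hm : 1 ≤ m) : MetricSpace (lpMDelta M p m n) where
  dist a b := f3 M p m n a.1 b.1
  dist_self a := by
    rw [f3_eq M hp]
    simp only [sub_self, abs_zero, Finset.sum_const_zero, zero_add]
    refine le_antisymm (le_of_forall_pos_le_add fun ε hε => ?_) (lux_nonneg _ _ _)
    rw [zero_add]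
    exact lux_le hε (by rw [lpSum_zero hM hp]; exact zero_le_one)
  dist_comm a b := by
    rw [f3_eq M hp, f3_eq M hp]
    congr 1
    · exact Finset.sum_congr rfl fun r _ => abs_sub_comm _ _
    · unfold lux
      congr! 4 with ρ
      rw [← lpSum_neg]
      simp only [neg_sub]
  dist_triangle a b c := by
    rw [f3_eq M hp, f3_eq M hp, f3_eq M hp]
    have h1 := lux_add hM hp (mem_sub hM hp a.2 b.2) (mem_sub hM hp b.2 c.2)
    simp only [sub_add_sub_cancel] at h1
    have h2 : ∑ r ∈ Finset.range (m * n), |a.1 r - c.1 r| ≤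
        ∑ r ∈ Finset.range (m * n), |a.1 r - b.1 r| +
        ∑ r ∈ Finset.range (m * n), |b.1 r - c.1 r| := by
      rw [← Finset.sum_add_distrib]
      exact Finset.sum_le_sum fun r _ => abs_sub_le _ _ _
    linarith
  eq_of_dist_eq_zero := by
    intro a b h
    change f3 M p m n a.1 b.1 = 0 at h
    ext k
    obtain ⟨C, _, hC⟩ := f3_bound hM hp hm n k
    have := hC a b
    rw [h, mul_zero] at this
    exact sub_eq_zero.1 (abs_nonpos_iff.1 this)

theorem lpDelta_complete_metric (M : ℝ → ℝ) (hM : IsOrliczFunction M) (p : ℝ) (hp : 1 ≤ p)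
    (m n : ℕ) (hm : 1 ≤ m) (hn : 1 ≤ n) :
    ∃ inst : MetricSpace (lpMDelta M p m n),
      (∀ a b : lpMDelta M p m n, @dist _ inst.toDist a b = f3 M p m n a.1 b.1) ∧
        @CompleteSpace _ inst.toUniformSpace := by
  refine ⟨lpMetric M hM p hp m n hm, fun a b => rfl, ?_⟩
  letI := lpMetric M hM p hp m n hm
  have hdist : ∀ a b : lpMDelta M p m n, dist a b = f3 M p m n a.1 b.1 := fun _ _ => rfl
  refine Metric.complete_of_cauchySeq_tendsto fun u hu => ?_
  have hlim : ∀ k, ∃ l, Filter.Tendsto (fun j => (u j).1 k) Filter.atTop (nhds l) := fun k => by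
    obtain ⟨C, hC0, hC⟩ := f3_bound hM hp hm n k
    refine cauchySeq_tendsto_of_complete (Metric.cauchySeq_iff.2 fun ε hε => ?_)
    obtain ⟨J, hJ⟩ := Metric.cauchySeq_iff.1 hu (ε / C) (by positivity)
    refine ⟨J, fun i hi j hj => ?_⟩
    have h1 := hJ i hi j hj
    rw [lt_div_iff₀ hC0, hdist] at h1
    rw [Real.dist_eq]
    linarith [hC (u i) (u j)]
  choose x hx using hlim
  have key : ∀ ε > 0, ∃ J, ∀ j ≥ J,
      lpSum M p (fun k => delta m n (u j).1 k - delta m n x k) ε ≤ 1 ∧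
      ∑ r ∈ Finset.range (m * n), |(u j).1 r - x r| ≤ ε := fun ε hε => by
    obtain ⟨J, hJ⟩ := Metric.cauchySeq_iff.1 hu ε hε
    have hJ' : ∀ i ≥ J, ∀ j ≥ J,
        lpSum M p (fun k => delta m n (u i).1 k - delta m n (u j).1 k) ε ≤ 1 ∧
        ∑ r ∈ Finset.range (m * n), |(u i).1 r - (u j).1 r| ≤ ε := fun i hi j hj => by
      have h1 := hJ i hi j hj
      rw [hdist, f3_eq M hp] at h1
      have hl := lux_nonneg M p (fun k => delta m n (u i).1 k - delta m n (u j).1 k)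
      have hs : 0 ≤ ∑ r ∈ Finset.range (m * n), |(u i).1 r - (u j).1 r| :=
        Finset.sum_nonneg fun _ _ => abs_nonneg _
      exact ⟨(lux_lt hM hp (mem_sub hM hp (u i).2 (u j).2) (by linarith)).2, by linarith⟩
    refine ⟨J, fun j hj => ⟨?_, ?_⟩⟩
    · refine lpSum_lim hM hε (fun i k => delta m n (u j).1 k - delta m n (u i).1 k) _
        (fun k => tendsto_const_nhds.sub (delta_tendsto m n (fun i => (u i).1) x hx k)) ?_
      filter_upwards [Filter.eventually_ge_atTop J] with i hi
      exact (hJ' j hj i hi).1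
    · refine le_of_tendsto (f := fun i => ∑ r ∈ Finset.range (m * n), |(u j).1 r - (u i).1 r|)
        (tendsto_finsetSum _ fun r _ => (tendsto_const_nhds.sub (hx r)).abs) ?_
      filter_upwards [Filter.eventually_ge_atTop J] with i hi
      exact (hJ' j hj i hi).2
  have hxm : x ∈ lpMDelta M p m n := by
    obtain ⟨J, hJ⟩ := key 1 one_pos
    obtain ⟨b, hb, h⟩ := mem_sub hM hp (u J).2
      ⟨1, one_pos, (hJ J le_rfl).1.trans_lt ENNReal.one_lt_top⟩
    simp only [sub_sub_cancel] at h
    exact ⟨b, hb, h.trans_lt ENNReal.one_lt_top⟩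
  refine ⟨⟨x, hxm⟩, Metric.tendsto_atTop.2 fun ε hε => ?_⟩
  obtain ⟨J, hJ⟩ := key (ε / 3) (by positivity)
  refine ⟨J, fun j hj => ?_⟩
  obtain ⟨h1, h2⟩ := hJ j hj
  rw [hdist, f3_eq M hp]
  have := lux_le (by positivity) h1
  simp only
  linarith
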